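/- Suppose a 3-form T and a 1-form θ on ℝ^8 satisfy the structure equation T_{klm} = (1/2) T_{jsk}Φ_{jslm} − (1/2) T_{jsl}Φ_{jskm} + (1/2) T_{jsm}Φ_{jskl} + (7/6) θ_sΦ_{sklm} for all k,l,m. Let σ^T be the 4-form with components σ^T_{abcd} = T_{sab}T_{scd} + T_{sbc}T_{sad} + T_{sca}T_{sbd}. Then σ^T_{jabc}Φ_{jabc} = 2‖T‖² − (49/3)‖θ‖², where ‖T‖² = T_{ijk}T_{ijk} and ‖θ‖² = θ_iθ_i (tensor norms, summing over all indices). -/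

import Mathlib

/-!
We work in ℝ⁸ with the standard basis `e₀, …, e₇`.  A `k`-form is a totally antisymmetric
map `(Fin 8)^k → ℝ`; repeated indices are summed over `Fin 8` and `kd` is the Kronecker
delta.  `Phi` is the fundamental 4-form of the standard `Spin(7)`-structure on ℝ⁸,
`Φ = -e₀₁₂₇ + e₀₂₃₆ - e₀₃₄₇ - e₀₅₆₇ + e₀₁₄₆ + e₀₂₄₅ - e₀₁₃₅
     - e₃₄₅₆ - e₁₄₅₇ - e₁₂₅₆ - e₁₂₃₄ - e₂₃₅₇ - e₁₃₆₇ + e₂₄₆₇`.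
-/

noncomputable section

/-- Kronecker delta on `Fin 8`. -/
def kd (a b : Fin 8) : ℝ := if a = b then 1 else 0

/-- Component at the indices `(i,j,k,l)` of the wedge product `e_a ∧ e_b ∧ e_c ∧ e_d`
of standard coordinate 1-forms, normalized so that `(e_a ∧ e_b ∧ e_c ∧ e_d)_{abcd} = 1`;
it is the alternating sum of products of Kronecker deltas. -/
def wedge4 (a b c d i j k l : Fin 8) : ℝ :=
  Matrix.det !![kd a i, kd a j, kd a k, kd a l;
                kd b i, kd b j, kd b k, kd b l;
                kd c i, kd c j, kd c k, kd c l;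
                kd d i, kd d j, kd d k, kd d l]

/-- The fundamental 4-form `Φ` of the standard `Spin(7)`-structure on `ℝ⁸`, in components:
the totally antisymmetric 4-tensor with `Φ_{0127} = -1`, `Φ_{0236} = 1`, `Φ_{0347} = -1`,
`Φ_{0567} = -1`, `Φ_{0146} = 1`, `Φ_{0245} = 1`, `Φ_{0135} = -1`, `Φ_{3456} = -1`,
`Φ_{1457} = -1`, `Φ_{1256} = -1`, `Φ_{1234} = -1`, `Φ_{2357} = -1`, `Φ_{1367} = -1`,
`Φ_{2467} = 1`, all components not obtained from these by permutation being zero. -/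
def Phi (i j k l : Fin 8) : ℝ :=
    -wedge4 0 1 2 7 i j k l + wedge4 0 2 3 6 i j k l - wedge4 0 3 4 7 i j k l
  - wedge4 0 5 6 7 i j k l + wedge4 0 1 4 6 i j k l + wedge4 0 2 4 5 i j k l
  - wedge4 0 1 3 5 i j k l - wedge4 3 4 5 6 i j k l - wedge4 1 4 5 7 i j k l
  - wedge4 1 2 5 6 i j k l - wedge4 1 2 3 4 i j k l - wedge4 2 3 5 7 i j k l
  - wedge4 1 3 6 7 i j k l + wedge4 2 4 6 7 i j k l

/-- The 4-form `σ^T` with `σ^T_{abcd} = T_{sab}T_{scd} + T_{sbc}T_{sad} + T_{sca}T_{sbd}`. -/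
def sigmaT (T : Fin 8 → Fin 8 → Fin 8 → ℝ) (a b c d : Fin 8) : ℝ :=
  ∑ s, (T s a b * T s c d + T s b c * T s a d + T s c a * T s b d)

/-- Base-4 table of the components of `Phi` (digit 1 for `1`, digit 2 for `-1`). -/
def phiTable : ℕ := 2277866406550250335773549427833658351451612770342338619880993904048462532463307833679235505333953198861835701950732954273438274422238884157410686793082990419756732865451473866128208027198719579826237541471210094469125955827498997959557394064329350686227415024882022229292165378781510323222143075839848522501035809787123769725232157795161768735773460571406379946180980620619912054535219979596276101664612163391906543591623300166706320642886735396896919770609073716069785899811893947665542713502074736353083398075321461764302362532433885053051296282965218406144796697916703406142800442637812953608559876906030752449107149293721947988429211337198976359143374709318241294312101345072985635375945085052357816051289203829052811137716307443088878337623628019472169177660989721900579283171273631251299889132748465535603385406629237236454910652740017285859868110300340761669405975450761071554140870284671208716766133510667060251895917306365681926243891360408843925623882485958488483160702987566641026077849331674650727086596498191984975467906534518581280583884900927448448108737612091326982736261544813818065342430052383538777630538684412887964300065034619298657064157359883732772037305415683936867202879438801439788353521260316509254578417565759284105486345973568321282851958902166114961172343476336520236902981215285883494007076957467098538412980298928779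1524290935314049927393280956485969162588464398903157263946551352555124041922212743306843758397503417289193478362623506553469057427564689365238465918320557461757376033092692283446263074786219853609094487280833171961057456414272795112329269117558380750305557847529555958487842549098747501198275846371589096737687041480810903099627378379009699924598214702598663526036818374152979342607527298022869378798685294883866380986785826582072398775617119847704710267754494403831767879716281144783133493027748642086960175241785713476008779841209390120395611150865343583470245733955249304379144193759032653559844118034365632006926912234962378717491545466290023298645695835496134119751324452224750685177830082085163248678267265822309133583661837484549679645208447244996491596725875924463205226262324910050843147168771751811750206215191369905587592837275133085701319418334888672482907659394471474156345370397663097421330317961500951200435545973243963422189515118569623324887383493862637552178243913597583360740712775054420300274080039684170323101446416227230090048548258674104074240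

/-- Integer lookup of a component of `Phi`. -/
def phiZ (i j k l : Fin 8) : ℤ :=
  match phiTable / 4 ^ (512 * i.val + 64 * j.val + 8 * k.val + l.val) % 4 with
  | 0 => 0
  | 1 => 1
  | _ => -1

/-- Lazy multiplication by a Kronecker delta. -/
def sel (a b : Fin 8) (x : ℤ) : ℤ := bif Nat.beq a.val b.val then x else 0

/-- Lazy version of `wedge4`. -/
def wedgeZ (a b c d i j k l : Fin 8) : ℤ :=
  sel a i (sel b j (sel c k (sel d l 1) - sel c l (sel d k 1))
    - sel b k (sel c j (sel d l 1) - sel c l (sel d j 1))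
    + sel b l (sel c j (sel d k 1) - sel c k (sel d j 1)))
  - sel a j (sel b i (sel c k (sel d l 1) - sel c l (sel d k 1))
    - sel b k (sel c i (sel d l 1) - sel c l (sel d i 1))
    + sel b l (sel c i (sel d k 1) - sel c k (sel d i 1)))
  + sel a k (sel b i (sel c j (sel d l 1) - sel c l (sel d j 1))
    - sel b j (sel c i (sel d l 1) - sel c l (sel d i 1))
    + sel b l (sel c i (sel d j 1) - sel c j (sel d i 1)))
  - sel a l (sel b i (sel c j (sel d k 1) - sel c k (sel d j 1))
    - sel b j (sel c i (sel d k 1) - sel c k (sel d i 1))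
    + sel b k (sel c i (sel d j 1) - sel c j (sel d i 1)))

lemma sel_cast (a b : Fin 8) (x : ℤ) : ((sel a b x : ℤ) : ℝ) = kd a b * x := by
  unfold sel kd
  by_cases h : a = b
  · subst h; simp
  · have : Nat.beq a.val b.val = false := 
      Bool.eq_false_iff.mpr fun e => h (Fin.ext (Nat.eq_of_beq_eq_true e))
    simp [h, this]

lemma wedge4_eq (a b c d i j k l : Fin 8) :
    wedge4 a b c d i j k l = (wedgeZ a b c d i j k l : ℤ) := by
  unfold wedge4 wedgeZ
  push_cast [sel_cast]
  simp [Matrix.det_succ_row_zero, Fin.sum_univ_succ, Fin.succAbove]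
  ring

/-- Integer version of `Phi`, as a sum of wedges. -/
def phiW (i j k l : Fin 8) : ℤ :=
    -wedgeZ 0 1 2 7 i j k l + wedgeZ 0 2 3 6 i j k l - wedgeZ 0 3 4 7 i j k l
  - wedgeZ 0 5 6 7 i j k l + wedgeZ 0 1 4 6 i j k l + wedgeZ 0 2 4 5 i j k l
  - wedgeZ 0 1 3 5 i j k l - wedgeZ 3 4 5 6 i j k l - wedgeZ 1 4 5 7 i j k l
  - wedgeZ 1 2 5 6 i j k l - wedgeZ 1 2 3 4 i j k l - wedgeZ 2 3 5 7 i j k l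
  - wedgeZ 1 3 6 7 i j k l + wedgeZ 2 4 6 7 i j k l

set_option maxRecDepth 100000 in
lemma phiW_eq : ∀ i j k l : Fin 8, phiW i j k l = phiZ i j k l := by decide +kernel

lemma Phi_eq (i j k l : Fin 8) : Phi i j k l = (phiZ i j k l : ℤ) := by
  rw [← phiW_eq]
  unfold Phi phiW
  push_cast [wedge4_eq]
  ring

set_option maxRecDepth 100000 in
lemma phiZ_symm : ∀ i j k l : Fin 8, phiZ j i k l = - phiZ i j k l ∧
    phiZ i k j l = - phiZ i j k l ∧ phiZ i j l k = - phiZ i j k l := by decide +kernel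

/-- Lazy multiplication by an entry of the table. -/
def phiMul (i j k l : Fin 8) (x : ℤ) : ℤ :=
  match phiTable / 4 ^ (512 * i.val + 64 * j.val + 8 * k.val + l.val) % 4 with
  | 0 => 0
  | 1 => x
  | _ => -x

lemma phiMul_eq (i j k l : Fin 8) (x : ℤ) : phiMul i j k l x = phiZ i j k l * x := by
  unfold phiMul phiZ
  split <;> simp

/-- Explicit sum over eight indices. -/
def sum8 (f : Fin 8 → ℤ) : ℤ := f 0 + f 1 + f 2 + f 3 + f 4 + f 5 + f 6 + f 7

lemma sum8_eq (f : Fin 8 → ℤ) : sum8 f = ∑ i, f i := by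
  rw [Fin.sum_univ_eight]; rfl

set_option maxRecDepth 100000 in
lemma contrZ : ∀ j s i k : Fin 8,
    sum8 (fun l => sum8 fun m => phiMul j s l m (phiZ i k l m))
      = sel j i (sel s k 6) - sel j k (sel s i 6) - 4 * phiZ j s i k := by decide +kernel

lemma contr (j s i k : Fin 8) :
    ∑ l, ∑ m, Phi j s l m * Phi i k l m
      = 6 * (kd j i * kd s k) - 6 * (kd j k * kd s i) - 4 * Phi j s i k := by
  have h := congrArg (fun z : ℤ => (z : ℝ)) (contrZ j s i k)
  simp only [sum8_eq, phiMul_eq] at h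
  push_cast [sel_cast] at h
  simp only [Phi_eq]
  rw [h]; ring

lemma Phi_swap12 (i j k l : Fin 8) : Phi j i k l = - Phi i j k l := by
  simp only [Phi_eq, (phiZ_symm i j k l).1]; push_cast; rfl

lemma Phi_swap23 (i j k l : Fin 8) : Phi i k j l = - Phi i j k l := by
  simp only [Phi_eq, (phiZ_symm i j k l).2.1]; push_cast; rfl

lemma Phi_swap34 (i j k l : Fin 8) : Phi i j l k = - Phi i j k l := by
  simp only [Phi_eq, (phiZ_symm i j k l).2.2]; push_cast; rfl

lemma contr3 (s i : Fin 8) :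
    ∑ k, ∑ l, ∑ m, Phi s k l m * Phi i k l m = 42 * kd s i := by
  have h0 : ∀ k, Phi s k i k = 0 := fun k => by
    have h1 := Phi_swap23 s k i k
    have h2 := Phi_swap34 s i k k
    linarith
  have h1 : ∀ k, kd k k = 1 := fun k => by simp [kd]
  simp only [contr, h0, h1]
  have h2 : ∑ k, kd s k * kd k i = kd s i := by
    simp [kd]
  simp only [Finset.sum_sub_distrib, ← Finset.mul_sum, h2]
  simp
  ring

/-- Cyclic relabelling of a triple sum. -/
lemma sum_rot (f : Fin 8 → Fin 8 → Fin 8 → ℝ) :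
    ∑ a, ∑ b, ∑ c, f a b c = ∑ a, ∑ b, ∑ c, f b c a := by
  rw [Finset.sum_comm' (t' := Finset.univ) (s' := fun _ => Finset.univ) (by simp)]
  rw [Finset.sum_comm]
  conv_rhs => rw [Finset.sum_comm]
  refine Finset.sum_congr rfl fun a _ => ?_
  rw [Finset.sum_comm]

/-- Exchange of two double sums. -/
lemma sum_swap4 (f : Fin 8 → Fin 8 → Fin 8 → Fin 8 → ℝ) :
    ∑ l, ∑ m, ∑ j, ∑ s, f l m j s = ∑ j, ∑ s, ∑ l, ∑ m, f l m j s := by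
  rw [sum_rot (fun l m j => ∑ s, f l m j s)]
  refine Finset.sum_congr rfl fun j _ => ?_
  rw [sum_rot (fun l m s => f l m j s)]

lemma sum_move5 (f : Fin 8 → Fin 8 → Fin 8 → Fin 8 → Fin 8 → ℝ) :
    ∑ k, ∑ l, ∑ m, ∑ j, ∑ s, f k l m j s = ∑ j, ∑ s, ∑ l, ∑ m, ∑ k, f k l m j s := by
  rw [← sum_rot (fun l m k => ∑ j, ∑ s, f k l m j s), ← sum_swap4 (fun l m j s => ∑ k, f k l m j s)]
  refine Finset.sum_congr rfl fun l _ => Finset.sum_congr rfl fun m _ => ?_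
  rw [← sum_rot (fun j s k => f k l m j s)]

/-- Contraction of a 3-form with the antisymmetrization of `A`. -/
lemma skew_contr (W A : Fin 8 → Fin 8 → Fin 8 → ℝ) (h1 : ∀ i j k, W i j k = - W j i k)
    (h2 : ∀ i j k, W i j k = - W i k j) :
    ∑ k, ∑ l, ∑ m, W k l m * ((1/2) * A k l m - (1/2) * A l k m + (1/2) * A m k l)
      = (3/2) * ∑ k, ∑ l, ∑ m, W k l m * A k l m := by
  have e1 : ∑ k, ∑ l, ∑ m, W k l m * A l k m = - ∑ k, ∑ l, ∑ m, W k l m * A k l m := by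
    rw [Finset.sum_comm]
    simp only [← Finset.sum_neg_distrib]
    refine Finset.sum_congr rfl fun k _ => Finset.sum_congr rfl fun l _ =>
      Finset.sum_congr rfl fun m _ => ?_
    rw [h1 l k m]; ring
  have e2 : ∑ k, ∑ l, ∑ m, W k l m * A m k l = ∑ k, ∑ l, ∑ m, W k l m * A k l m := by
    rw [sum_rot]
    refine Finset.sum_congr rfl fun k _ => Finset.sum_congr rfl fun l _ =>
      Finset.sum_congr rfl fun m _ => ?_
    rw [h2 l m k, h1 l k m]; ring
  have e3 : ∀ k l m, W k l m * ((1/2) * A k l m - (1/2) * A l k m + (1/2) * A m k l)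
      = (1/2) * (W k l m * A k l m) - (1/2) * (W k l m * A l k m)
        + (1/2) * (W k l m * A m k l) := fun k l m => by ring
  simp only [e3, Finset.sum_add_distrib, Finset.sum_sub_distrib, ← Finset.mul_sum, e1, e2]
  ring

/-- If a 3-form `T` and a 1-form `θ` satisfy the structure equation, then
`σ^T_{jabc}Φ_{jabc} = 2‖T‖² - (49/3)‖θ‖²`. -/
theorem spin7_sigmaT_contraction :
    ∀ T : Fin 8 → Fin 8 → Fin 8 → ℝ, ∀ θ : Fin 8 → ℝ,
      (∀ i j k, T i j k = -T j i k ∧ T i j k = -T i k j) →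
      (∀ k l m, T k l m =
          (1/2) * (∑ j, ∑ s, T j s k * Phi j s l m)
        - (1/2) * (∑ j, ∑ s, T j s l * Phi j s k m)
        + (1/2) * (∑ j, ∑ s, T j s m * Phi j s k l)
        + (7/6) * ∑ s, θ s * Phi s k l m) →
      (∑ j, ∑ a, ∑ b, ∑ c, sigmaT T j a b c * Phi j a b c)
        = 2 * (∑ i, ∑ j, ∑ k, T i j k * T i j k) - (49/3) * ∑ i, θ i * θ i := by
  intro T θ hT hS
  have t1 : ∀ i j k, T i j k = - T j i k := fun i j k => (hT i j k).1
  have t2 : ∀ i j k, T i j k = - T i k j := fun i j k => (hT i j k).2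
  have t13 : ∀ k j s, T j s k = T k j s := fun k j s => by rw [t2 j s k, t1 j k s]; ring
  obtain ⟨A, hA⟩ : ∃ A : Fin 8 → Fin 8 → Fin 8 → ℝ,
      ∀ k l m, A k l m = ∑ j, ∑ s, T j s k * Phi j s l m := ⟨_, fun _ _ _ => rfl⟩
  obtain ⟨B, hB⟩ : ∃ B : Fin 8 → Fin 8 → Fin 8 → ℝ,
      ∀ k l m, B k l m = ∑ s, θ s * Phi s k l m := ⟨_, fun _ _ _ => rfl⟩
  obtain ⟨F, hF⟩ : ∃ F : Fin 8 → Fin 8 → Fin 8 → Fin 8 → ℝ,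
      ∀ j a b c, F j a b c = ∑ s, T s j a * T s b c * Phi j a b c := ⟨_, fun _ _ _ _ => rfl⟩
  obtain ⟨X, hX⟩ : ∃ X : Fin 8 → ℝ,
      ∀ i, X i = ∑ k, ∑ l, ∑ m, Phi i k l m * T k l m := ⟨_, fun _ => rfl⟩
  have hS' : ∀ k l m, T k l m = ((1/2) * A k l m - (1/2) * A l k m + (1/2) * A m k l)
      + (7/6) * B k l m := fun k l m => by
    rw [hS k l m, hA, hA, hA, hB]
  -- the contraction of `σ^T` is three times the basic quadratic expression
  have s1 : ∑ j, ∑ a, ∑ b, ∑ c, sigmaT T j a b c * Phi j a b c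
      = 3 * ∑ j, ∑ a, ∑ b, ∑ c, F j a b c := by
    have e : ∀ j a b c, sigmaT T j a b c * Phi j a b c
        = F j a b c + F a b j c + F b j a c := fun j a b c => by
      have p1 : Phi a b j c = Phi j a b c := by
        rw [Phi_swap23 a j b c, Phi_swap12 j a b c]; ring
      have p2 : Phi b j a c = Phi j a b c := by
        rw [Phi_swap12 j b a c, Phi_swap23 j a b c]; ring
      rw [hF, hF, hF, p1, p2, sigmaT, Finset.sum_mul, ← Finset.sum_add_distrib,
        ← Finset.sum_add_distrib]
      refine Finset.sum_congr rfl fun s _ => ?_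
      ring
    simp only [e, Finset.sum_add_distrib]
    have r1 := sum_rot (fun j a b => ∑ c, F j a b c)
    have r2 := sum_rot (fun j a b => ∑ c, F a b j c)
    have r3 := sum_rot (fun j a b => ∑ c, F b j a c)
    linarith
  -- the same expression as the pairing of `T` with `A`
  have s2 : ∑ k, ∑ l, ∑ m, T k l m * A k l m = ∑ j, ∑ a, ∑ b, ∑ c, F j a b c := by
    simp only [hA, hF, Finset.mul_sum]
    rw [sum_move5]
    refine Finset.sum_congr rfl fun j _ => Finset.sum_congr rfl fun s _ =>
      Finset.sum_congr rfl fun l _ => Finset.sum_congr rfl fun m _ =>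
      Finset.sum_congr rfl fun k _ => ?_
    rw [t13 k j s]; ring
  -- pairing with `B`
  have hB' : ∀ W : Fin 8 → Fin 8 → Fin 8 → ℝ, ∑ k, ∑ l, ∑ m, W k l m * B k l m
      = ∑ s, θ s * ∑ k, ∑ l, ∑ m, Phi s k l m * W k l m := fun W => by
    simp only [hB, Finset.mul_sum]
    have q : ∀ k, ∑ l, ∑ m, ∑ s, W k l m * (θ s * Phi s k l m)
        = ∑ s, ∑ l, ∑ m, W k l m * (θ s * Phi s k l m) := fun k =>
      sum_rot (fun l m s => W k l m * (θ s * Phi s k l m))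
    simp only [q]
    rw [Finset.sum_comm]
    refine Finset.sum_congr rfl fun s _ => Finset.sum_congr rfl fun k _ =>
      Finset.sum_congr rfl fun l _ => Finset.sum_congr rfl fun m _ => ?_
    ring
  have split : ∀ W : Fin 8 → Fin 8 → Fin 8 → ℝ, (∀ i j k, W i j k = - W j i k) →
      (∀ i j k, W i j k = - W i k j) → ∑ k, ∑ l, ∑ m, W k l m * T k l m
      = (3/2) * (∑ k, ∑ l, ∑ m, W k l m * A k l m)
        + (7/6) * ∑ k, ∑ l, ∑ m, W k l m * B k l m := fun W w1 w2 => by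
    rw [← skew_contr W A w1 w2]
    simp only [Finset.mul_sum, ← Finset.sum_add_distrib]
    refine Finset.sum_congr rfl fun k _ => Finset.sum_congr rfl fun l _ =>
      Finset.sum_congr rfl fun m _ => ?_
    rw [hS' k l m]; ring
  have s3 : ∑ i, ∑ j, ∑ k, T i j k * T i j k
      = (3/2) * (∑ k, ∑ l, ∑ m, T k l m * A k l m) + (7/6) * ∑ s, θ s * X s := by
    rw [split T t1 t2, hB' T]
    simp only [hX]
  have s4 : ∀ i, ∑ k, ∑ l, ∑ m, Phi i k l m * A k l m = -4 * X i := fun i => by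
    have e : ∀ k, ∑ l, ∑ m, Phi i k l m * A k l m
        = ∑ j, ∑ s, -4 * (Phi i j s k * T j s k) := fun k => by
      simp only [hA, Finset.mul_sum]
      rw [sum_swap4]
      refine Finset.sum_congr rfl fun j _ => Finset.sum_congr rfl fun s _ => ?_
      have c1 : ∑ l, ∑ m, Phi i k l m * (T j s k * Phi j s l m)
          = T j s k * ∑ l, ∑ m, Phi j s l m * Phi i k l m := by
        simp only [Finset.mul_sum]
        refine Finset.sum_congr rfl fun l _ => Finset.sum_congr rfl fun m _ => ?_
        ring
      have z1 : T j s k * kd s k = 0 := by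
        by_cases h : s = k
        · subst h
          have := t2 j s s
          have z : T j s s = 0 := by linarith
          rw [z, zero_mul]
        · simp [kd, h]
      have z2 : T j s k * kd j k = 0 := by
        by_cases h : j = k
        · subst h
          have h1 := t13 j j s
          have h2 := t1 j j s
          have z : T j s j = 0 := by linarith
          rw [z, zero_mul]
        · simp [kd, h]
      have p : Phi j s i k = Phi i j s k := by
        rw [Phi_swap23 j i s k, Phi_swap12 i j s k]; ring
      rw [c1, contr, p]
      linear_combination 6 * kd j i * z1 - 6 * kd s i * z2
    simp only [e]
    rw [hX, ← sum_rot (fun j s k => -4 * (Phi i j s k * T j s k))]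
    simp only [← Finset.mul_sum]
  have s5 : ∀ i, X i = 7 * θ i := fun i => by
    have h1 : ∀ a b c, Phi i a b c = - Phi i b a c := fun a b c => by
      rw [Phi_swap23 i b a c]
    have h2 : ∀ a b c, Phi i a b c = - Phi i a c b := fun a b c => by
      rw [Phi_swap34 i a c b]
    have h := split (Phi i) h1 h2
    rw [s4, hB', ← hX] at h
    simp only [contr3] at h
    have h3 : ∑ s, θ s * (42 * kd s i) = 42 * θ i := by
      simp [kd, mul_comm]
    rw [h3] at h
    linarith
  have s6 : ∑ s, θ s * X s = 7 * ∑ i, θ i * θ i := by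
    rw [Finset.mul_sum]
    refine Finset.sum_congr rfl fun s _ => ?_
    rw [s5]; ring
  rw [s1, ← s2, s3, s6]
  ring
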